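/- Let 𝓛 > 0, let f, g : ℝ^d → ℝ be bounded measurable 𝓛-periodic functions, and let p, p₁, p₂ ∈ [1,∞] satisfy 1/p = 1/p₁ + 1/p₂. Then for every ℓ > 0, ‖τ̄_ℓ(f,g)‖_p ≤ 2 · sup_{|r|<ℓ} ‖δf(r;·)‖_{p₁} · sup_{|r|<ℓ} ‖δg(r;·)‖_{p₂}. -/

import Mathlib

/-!
At each point `x`, the cumulant `τ̄_ℓ(f,g)(x)` is the covariance of `r ↦ f (x + r)` and
`r ↦ g (x + r)` under the probability measure `G_ℓ(r) dr`. Covariances do not change under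
subtraction of constants, so (`IsMollifier.tau2_eq`)
`τ̄_ℓ(f,g) = ∫ δf(r) δg(r) G_ℓ(r) dr - (∫ δf(r) G_ℓ(r) dr) (∫ δg(r) G_ℓ(r) dr)`.
An average of functions of `L^p` norm at most `C` has `L^p` norm at most `C`
(`eLpNorm_average_le`), and `G_ℓ(r) dr` is carried by the ball `|r| < ℓ`. Together with Hölder's
inequality this bounds each of the two terms by the product of the two suprema, and the triangle
inequality produces the factor `2`.
-/

open MeasureTheory Metric
open scoped RealInnerProductSpace ENNReal

noncomputable section

abbrev Euc (d : ℕ) := EuclideanSpace ℝ (Fin d)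

namespace QT

variable {d : ℕ}

/-- `G` is a mollifier: smooth, nonnegative, supported in the open unit ball, integral one. -/
structure IsMollifier {d : ℕ} (G : Euc d → ℝ) : Prop where
  smooth : ContDiff ℝ (⊤ : ℕ∞) G
  nonneg : ∀ r, 0 ≤ G r
  supp : tsupport G ⊆ ball (0 : Euc d) 1
  integral_one : ∫ r, G r = 1

/-- The rescaled mollifier `G_ℓ(r) = ℓ^{-d} G(r/ℓ)`. -/
def resc (G : Euc d → ℝ) (ℓ : ℝ) (r : Euc d) : ℝ := (ℓ ^ d)⁻¹ * G (ℓ⁻¹ • r)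

/-- Coarse-grained field `ā_ℓ(x) = ∫ G_ℓ(r) a(x+r) dr`. -/
def cg {E : Type*} [NormedAddCommGroup E] [NormedSpace ℝ E]
    (G : Euc d → ℝ) (ℓ : ℝ) (a : Euc d → E) (x : Euc d) : E :=
  ∫ r, resc G ℓ r • a (x + r)

/-- Increment `δa(r;x) = a(x+r) - a(x)`. -/
def incr {E : Type*} [NormedAddCommGroup E] (a : Euc d → E) (r x : Euc d) : E :=
  a (x + r) - a x

/-- `δa(ℓ;x) = sup_{|r|<ℓ} |δa(r;x)|`. -/
def supIncr {E : Type*} [NormedAddCommGroup E] (a : Euc d → E) (ℓ : ℝ) (x : Euc d) : ℝ :=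
  ⨆ r ∈ ball (0 : Euc d) ℓ, ‖incr a r x‖

/-- Second-order coarse-graining cumulant `τ̄_ℓ(f,g)`. -/
def tau2 (G : Euc d → ℝ) (ℓ : ℝ) (f g : Euc d → ℝ) (x : Euc d) : ℝ :=
  cg G ℓ (fun y => f y * g y) x - cg G ℓ f x * cg G ℓ g x

/-- `τ̄_ℓ(ρ, v)` for a scalar density and a vector field. -/
def tauV (G : Euc d → ℝ) (ℓ : ℝ) (ρ : Euc d → ℝ) (v : Euc d → Euc d) (x : Euc d) : Euc d :=
  cg G ℓ (fun y => ρ y • v y) x - cg G ℓ ρ x • cg G ℓ v x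

/-- `i`-th standard basis vector. -/
def e (d : ℕ) (i : Fin d) : Euc d := EuclideanSpace.single i (1 : ℝ)

/-- Partial derivative `∂_i f(x)`. -/
def pd (i : Fin d) (f : Euc d → ℝ) (x : Euc d) : ℝ := fderiv ℝ f x (e d i)

/-- Laplacian. -/
def lap (f : Euc d → ℝ) (x : Euc d) : ℝ := ∑ i, pd i (fun y => pd i f y) x

/-- Gradient matrix `(∇v)_{ij} = ∂_i v_j`. -/
def gradMat (v : Euc d → Euc d) (x : Euc d) : Matrix (Fin d) (Fin d) ℝ :=
  Matrix.of fun i j => pd i (fun y => v y j) x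

/-- Frobenius norm of a matrix. -/
def frobNorm (A : Matrix (Fin d) (Fin d) ℝ) : ℝ := Real.sqrt (∑ i, ∑ j, A i j ^ 2)

/-- Frobenius inner product `A : B`. -/
def frobInner (A B : Matrix (Fin d) (Fin d) ℝ) : ℝ := ∑ i, ∑ j, A i j * B i j

/-- Favre-averaged velocity `ṽ_ℓ = \overline{(ρv)}_ℓ/ρ̄_ℓ` where `ρ̄_ℓ > 0`, `0` otherwise. -/
def favre (G : Euc d → ℝ) (ℓ : ℝ) (ρ : Euc d → ℝ) (v : Euc d → Euc d) (x : Euc d) : Euc d :=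
  if 0 < cg G ℓ ρ x then (cg G ℓ ρ x)⁻¹ • cg G ℓ (fun y => ρ y • v y) x else 0

/-- Favre stress `τ̃_ℓ(v,v) = \overline{(ρ v⊗v)}_ℓ/ρ̄_ℓ − ṽ_ℓ ⊗ ṽ_ℓ`. -/
def favreStress (G : Euc d → ℝ) (ℓ : ℝ) (ρ : Euc d → ℝ) (v : Euc d → Euc d) (x : Euc d) :
    Matrix (Fin d) (Fin d) ℝ :=
  Matrix.of fun i j =>
    (cg G ℓ ρ x)⁻¹ * cg G ℓ (fun y => ρ y * (v y i * v y j)) x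
      - favre G ℓ ρ v x i * favre G ℓ ρ v x j

/-- Deformation work `Π_ℓ = −ρ̄_ℓ ∇ṽ_ℓ : τ̃_ℓ(v,v)`. -/
def deformWork (G : Euc d → ℝ) (ℓ : ℝ) (ρ : Euc d → ℝ) (v : Euc d → Euc d) (x : Euc d) : ℝ :=
  -(cg G ℓ ρ x * frobInner (gradMat (favre G ℓ ρ v) x) (favreStress G ℓ ρ v x))

/-- The periodic box `[0,𝓛]^d`. -/
def box (d : ℕ) (L : ℝ) : Set (Euc d) := {x | ∀ i, x i ∈ Set.Icc (0 : ℝ) L}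

/-- Normalized measure on the periodic box, so that `eLpNorm · p (boxMeasure d 𝓛)`
is the normalized `L^p` norm `(𝓛^{-d}∫_{[0,𝓛]^d}|f|^p)^{1/p}` (ess-sup for `p = ∞`). -/
def boxMeasure (d : ℕ) (L : ℝ) : Measure (Euc d) :=
  (ENNReal.ofReal (L ^ d))⁻¹ • (volume.restrict (box d L))

/-- `𝓛`-periodicity in each coordinate. -/
def PeriodicF {E : Type*} (L : ℝ) (f : Euc d → E) : Prop :=
  ∀ (x : Euc d) (i : Fin d), f (x + EuclideanSpace.single i L) = f x

/-- Quantum stress `Σ = (ħ²/4m²)(Δρ)I − (ħ²/m²)∇√ρ ⊗ ∇√ρ`. -/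
def qStress (hb m : ℝ) (ρ : Euc d → ℝ) (x : Euc d) : Matrix (Fin d) (Fin d) ℝ :=
  Matrix.of fun i j =>
    (hb ^ 2 / (4 * m ^ 2)) * lap ρ x * (if i = j then (1 : ℝ) else 0)
      - (hb ^ 2 / m ^ 2) * (gradient (fun y => Real.sqrt (ρ y)) x i
          * gradient (fun y => Real.sqrt (ρ y)) x j)

/-- Coarse-grained quantum stress `Σ̄_ℓ`. -/
def cgStress (G : Euc d → ℝ) (ℓ hb m : ℝ) (ρ : Euc d → ℝ) (x : Euc d) :
    Matrix (Fin d) (Fin d) ℝ :=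
  Matrix.of fun i j => cg G ℓ (fun z => qStress hb m ρ z i j) x

/-- Row-wise divergence of the coarse-grained quantum stress, `(∇·Σ̄_ℓ)_j = ∑_i ∂_i (Σ̄_ℓ)_{ij}`. -/
def divCgStress (G : Euc d → ℝ) (ℓ hb m : ℝ) (ρ : Euc d → ℝ) (x : Euc d) : Euc d :=
  (EuclideanSpace.equiv (Fin d) ℝ).symm
    (fun j => ∑ i, pd i (fun y => cgStress G ℓ hb m ρ y i j) x)

/-- Quantum baropycnal work `Λ^{(Σ)}_ℓ = −(1/ρ̄_ℓ)(∇·Σ̄_ℓ)·τ̄_ℓ(ρ,v)`. -/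
def qBaroWork (G : Euc d → ℝ) (ℓ hb m : ℝ) (ρ : Euc d → ℝ) (v : Euc d → Euc d) (x : Euc d) : ℝ :=
  -((cg G ℓ ρ x)⁻¹ * ⟪divCgStress G ℓ hb m ρ x, tauV G ℓ ρ v x⟫)

end QT

/-- For a probability measure `μ` and parameter-dependent functions `F x` with
`‖F x‖_p ≤ C` for `μ`-almost every `x`, the average `∫ F x ∂μ` also satisfies `‖·‖_p ≤ C`.
For finite `p` this is Jensen's inequality followed by Tonelli; for `p = ∞` it is the exchange
of almost-everywhere quantifiers. -/
lemma eLpNorm_average_le {X Y : Type*} [MeasurableSpace X] [MeasurableSpace Y]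
    (μ : Measure X) [IsProbabilityMeasure μ] (ν : Measure Y) [SFinite ν]
    (F : X → Y → ℝ) (hF : Measurable (Function.uncurry F)) (p : ℝ≥0∞) (hp : 1 ≤ p)
    (C : ℝ≥0∞) (hC : ∀ᵐ x ∂μ, eLpNorm (F x) p ν ≤ C) :
    eLpNorm (fun y => ∫ x, F x y ∂μ) p ν ≤ C := by
  have hFy : ∀ y, Measurable fun x => F x y := fun y => hF.comp measurable_prodMk_right
  rcases eq_or_ne p ∞ with rfl | hpt
  · simp only [eLpNorm_exponent_top] at hC ⊢
    have hmeas : MeasurableSet {z : X × Y | ‖F z.1 z.2‖ₑ ≤ C} :=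
      measurableSet_le hF.enorm measurable_const
    have h1 : ∀ᵐ x ∂μ, ∀ᵐ y ∂ν, ‖F x y‖ₑ ≤ C := by
      filter_upwards [hC] with x hx
      filter_upwards [enorm_ae_le_eLpNormEssSup (F x) ν] with y hy using hy.trans hx
    have h2 : ∀ᵐ y ∂ν, ∀ᵐ x ∂μ, ‖F x y‖ₑ ≤ C := (Measure.ae_ae_comm hmeas).1 h1
    refine essSup_le_of_ae_le C ?_
    filter_upwards [h2] with y hy
    calc ‖∫ x, F x y ∂μ‖ₑ ≤ ∫⁻ x, ‖F x y‖ₑ ∂μ := enorm_integral_le_lintegral_enorm _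
      _ ≤ ∫⁻ _, C ∂μ := lintegral_mono_ae hy
      _ = C := by simp
  · have hp0 : p ≠ 0 := (zero_lt_one.trans_le hp).ne'
    have hq : 0 < p.toReal := ENNReal.toReal_pos hp0 hpt
    have hjensen : ∀ y, ‖∫ x, F x y ∂μ‖ₑ ^ p.toReal ≤ ∫⁻ x, ‖F x y‖ₑ ^ p.toReal ∂μ := by
      intro y
      have h := eLpNorm_le_eLpNorm_of_exponent_le (μ := μ) hp (hFy y).aestronglyMeasurable
      rw [eLpNorm_one_eq_lintegral_enorm] at h
      have h' := (enorm_integral_le_lintegral_enorm (μ := μ) fun x => F x y).trans h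
      rw [eLpNorm_eq_lintegral_rpow_enorm_toReal hp0 hpt, one_div] at h'
      exact (ENNReal.le_rpow_inv_iff hq).1 h'
    rw [eLpNorm_eq_lintegral_rpow_enorm_toReal hp0 hpt, one_div, ENNReal.rpow_inv_le_iff hq]
    calc ∫⁻ y, ‖∫ x, F x y ∂μ‖ₑ ^ p.toReal ∂ν
        ≤ ∫⁻ y, ∫⁻ x, ‖F x y‖ₑ ^ p.toReal ∂μ ∂ν := lintegral_mono hjensen
      _ = ∫⁻ x, ∫⁻ y, ‖F x y‖ₑ ^ p.toReal ∂ν ∂μ :=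
          (lintegral_lintegral_swap (hF.enorm.pow_const _).aemeasurable).symm
      _ ≤ ∫⁻ _, C ^ p.toReal ∂μ := by
          refine lintegral_mono_ae ?_
          filter_upwards [hC] with x hx
          rwa [eLpNorm_eq_lintegral_rpow_enorm_toReal hp0 hpt, one_div,
            ENNReal.rpow_inv_le_iff hq] at hx
      _ = C ^ p.toReal := by simp

lemma eLpNorm_mul_le_mul_eLpNorm {Y : Type*} [MeasurableSpace Y] {ν : Measure Y}
    {p p₁ p₂ : ℝ≥0∞} [ENNReal.HolderTriple p₁ p₂ p] {u v : Y → ℝ}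
    (hu : AEStronglyMeasurable u ν) (hv : AEStronglyMeasurable v ν) :
    eLpNorm (fun x => u x * v x) p ν ≤ eLpNorm u p₁ ν * eLpNorm v p₂ ν := by
  have h := eLpNorm_smul_le_mul_eLpNorm (p := p₁) (q := p₂) (r := p) hv hu
  exact h

namespace QT

lemma IsMollifier.integral_resc {d : ℕ} {G : Euc d → ℝ} (hG : IsMollifier G) {ℓ : ℝ}
    (hℓ : 0 < ℓ) : ∫ r, resc G ℓ r = 1 := by
  have h := Measure.integral_comp_inv_smul (volume : Measure (Euc d)) G ℓ
  simp only [finrank_euclideanSpace, Fintype.card_fin, hG.integral_one] at h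
  simp only [resc]
  rw [integral_const_mul, h, abs_of_pos (pow_pos hℓ d), smul_eq_mul, mul_one,
    inv_mul_cancel₀ (pow_pos hℓ d).ne']

lemma IsMollifier.resc_nonneg {d : ℕ} {G : Euc d → ℝ} (hG : IsMollifier G) {ℓ : ℝ}
    (hℓ : 0 < ℓ) (r : Euc d) : 0 ≤ resc G ℓ r :=
  mul_nonneg (inv_nonneg.2 (pow_pos hℓ d).le) (hG.nonneg _)

lemma IsMollifier.resc_eq_zero {d : ℕ} {G : Euc d → ℝ} (hG : IsMollifier G) {ℓ : ℝ}
    (hℓ : 0 < ℓ) {r : Euc d} (hr : r ∉ ball (0 : Euc d) ℓ) : resc G ℓ r = 0 := by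
  have h : ℓ⁻¹ • r ∉ tsupport G := by
    intro hmem
    have h1 := hG.supp hmem
    rw [mem_ball_zero_iff, norm_smul, Real.norm_eq_abs, abs_of_pos (inv_pos.2 hℓ),
      inv_mul_lt_iff₀ hℓ, mul_one] at h1
    exact hr (mem_ball_zero_iff.2 h1)
  rw [resc, image_eq_zero_of_notMem_tsupport h, mul_zero]

lemma IsMollifier.measurable_resc {d : ℕ} {G : Euc d → ℝ} (hG : IsMollifier G) (ℓ : ℝ) :
    Measurable (resc G ℓ) :=
  (hG.smooth.continuous.measurable.comp (measurable_const_smul ℓ⁻¹)).const_mul _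

/-- The measure `G_ℓ(r) dr`, against which coarse-graining averages the translates of a field. -/
def mollMeasure {d : ℕ} (G : Euc d → ℝ) (ℓ : ℝ) : Measure (Euc d) :=
  volume.withDensity fun r => ENNReal.ofReal (resc G ℓ r)

lemma IsMollifier.isProbabilityMeasure {d : ℕ} {G : Euc d → ℝ} (hG : IsMollifier G) {ℓ : ℝ}
    (hℓ : 0 < ℓ) : IsProbabilityMeasure (mollMeasure G ℓ) := by
  constructor
  have hint : Integrable (resc G ℓ) := by
    by_contra h
    have h1 := hG.integral_resc hℓ
    rw [integral_undef h] at h1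
    exact zero_ne_one h1
  rw [mollMeasure, withDensity_apply _ MeasurableSet.univ, Measure.restrict_univ,
    ← ofReal_integral_eq_lintegral_ofReal hint (ae_of_all _ (hG.resc_nonneg hℓ)),
    hG.integral_resc hℓ, ENNReal.ofReal_one]

lemma IsMollifier.ae_mem_ball {d : ℕ} {G : Euc d → ℝ} (hG : IsMollifier G) {ℓ : ℝ}
    (hℓ : 0 < ℓ) : ∀ᵐ r ∂mollMeasure G ℓ, r ∈ ball (0 : Euc d) ℓ := by
  rw [mollMeasure, ae_withDensity_iff (hG.measurable_resc ℓ).ennreal_ofReal]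
  refine ae_of_all _ fun r hr => ?_
  by_contra h
  exact hr (by rw [hG.resc_eq_zero hℓ h, ENNReal.ofReal_zero])

lemma IsMollifier.cg_eq {d : ℕ} {G : Euc d → ℝ} (hG : IsMollifier G) {ℓ : ℝ}
    (hℓ : 0 < ℓ) (a : Euc d → ℝ) (x : Euc d) :
    cg G ℓ a x = ∫ r, a (x + r) ∂mollMeasure G ℓ := by
  rw [mollMeasure, integral_withDensity_eq_integral_toReal_smul
    (hG.measurable_resc ℓ).ennreal_ofReal (ae_of_all _ fun _ => ENNReal.ofReal_lt_top)]
  simp only [cg, ENNReal.toReal_ofReal (hG.resc_nonneg hℓ _)]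

lemma measurable_uncurry_incr {d : ℕ} {a : Euc d → ℝ} (ha : Measurable a) :
    Measurable (Function.uncurry (incr a)) :=
  (ha.comp (measurable_snd.add measurable_fst)).sub (ha.comp measurable_snd)

/-- A covariance is unchanged when constants are subtracted from its arguments: `τ̄_ℓ(f,g)(x)`
is the covariance of `r ↦ δf(r;x)` and `r ↦ δg(r;x)` under `G_ℓ(r) dr`. -/
lemma IsMollifier.tau2_eq {d : ℕ} {G : Euc d → ℝ} (hG : IsMollifier G) {ℓ : ℝ}
    (hℓ : 0 < ℓ) {f g : Euc d → ℝ} (hfm : Measurable f) (hgm : Measurable g)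
    {Cf Cg : ℝ} (hfb : ∀ y, |f y| ≤ Cf) (hgb : ∀ y, |g y| ≤ Cg) (x : Euc d) :
    tau2 G ℓ f g x = (∫ r, incr f r x * incr g r x ∂mollMeasure G ℓ)
      - (∫ r, incr f r x ∂mollMeasure G ℓ) * ∫ r, incr g r x ∂mollMeasure G ℓ := by
  have := hG.isProbabilityMeasure hℓ
  have hf : Integrable (fun r => f (x + r)) (mollMeasure G ℓ) :=
    .of_bound (hfm.comp (measurable_const_add x)).aestronglyMeasurable Cf
      (ae_of_all _ fun r => hfb _)
  have hg : Integrable (fun r => g (x + r)) (mollMeasure G ℓ) :=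
    .of_bound (hgm.comp (measurable_const_add x)).aestronglyMeasurable Cg
      (ae_of_all _ fun r => hgb _)
  have hfg : Integrable (fun r => f (x + r) * g (x + r)) (mollMeasure G ℓ) :=
    hf.mul_bdd (c := Cg) (hgm.comp (measurable_const_add x)).aestronglyMeasurable
      (ae_of_all _ fun r => hgb _)
  have e1 : ∫ r, incr f r x ∂mollMeasure G ℓ = (∫ r, f (x + r) ∂mollMeasure G ℓ) - f x := by
    simp only [incr]
    rw [integral_sub hf (integrable_const _)]
    simp
  have e2 : ∫ r, incr g r x ∂mollMeasure G ℓ = (∫ r, g (x + r) ∂mollMeasure G ℓ) - g x := by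
    simp only [incr]
    rw [integral_sub hg (integrable_const _)]
    simp
  have e3 : ∫ r, incr f r x * incr g r x ∂mollMeasure G ℓ
      = (∫ r, f (x + r) * g (x + r) ∂mollMeasure G ℓ) - (∫ r, f (x + r) ∂mollMeasure G ℓ) * g x
        - f x * (∫ r, g (x + r) ∂mollMeasure G ℓ) + f x * g x := by
    have : ∀ r, incr f r x * incr g r x
        = f (x + r) * g (x + r) - f (x + r) * g x - f x * g (x + r) + f x * g x := by
      intro r; simp only [incr]; ring
    simp only [this]
    have i1 : Integrable (fun r => f (x + r) * g (x + r) - f (x + r) * g x) (mollMeasure G ℓ) :=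
      hfg.sub (hf.mul_const _)
    have i2 : Integrable (fun r => f (x + r) * g (x + r) - f (x + r) * g x - f x * g (x + r))
        (mollMeasure G ℓ) := i1.sub (hg.const_mul _)
    rw [integral_add i2 (integrable_const _), integral_sub i1 (hg.const_mul _),
      integral_sub hfg (hf.mul_const _), integral_mul_const, integral_const_mul]
    simp
  rw [tau2, hG.cg_eq hℓ, hG.cg_eq hℓ, hG.cg_eq hℓ, e1, e2, e3]
  ring

end QT

open QT in
/-- `L^p` cumulant estimate with Hölder exponents `1/p = 1/p₁ + 1/p₂`,
for `𝓛`-periodic bounded measurable `f, g`; the normalized `L^p` norms (with the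
convention `‖·‖_∞ = ess sup`) are realized as `eLpNorm` w.r.t. the normalized box measure. -/
theorem eLpNorm_tau2_le {d : ℕ} (hd : 1 ≤ d)
    (G : Euc d → ℝ) (hG : IsMollifier G) (𝓛 : ℝ) (h𝓛 : 0 < 𝓛)
    (f g : Euc d → ℝ) (hfm : Measurable f) (hgm : Measurable g)
    (Cf Cg : ℝ) (hfb : ∀ y, |f y| ≤ Cf) (hgb : ∀ y, |g y| ≤ Cg)
    (hfp : PeriodicF 𝓛 f) (hgp : PeriodicF 𝓛 g)
    (p p₁ p₂ : ℝ≥0∞) (hp : 1 ≤ p) (hp₁ : 1 ≤ p₁) (hp₂ : 1 ≤ p₂)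
    (hHolder : 1 / p = 1 / p₁ + 1 / p₂) (ℓ : ℝ) (hℓ : 0 < ℓ) :
    eLpNorm (tau2 G ℓ f g) p (boxMeasure d 𝓛) ≤
      2 * (⨆ r ∈ ball (0 : Euc d) ℓ, eLpNorm (incr f r) p₁ (boxMeasure d 𝓛))
        * (⨆ r ∈ ball (0 : Euc d) ℓ, eLpNorm (incr g r) p₂ (boxMeasure d 𝓛)) := by
  have := hG.isProbabilityMeasure hℓ
  have : SFinite (boxMeasure d 𝓛) := by unfold boxMeasure; infer_instance
  have : ENNReal.HolderTriple p₁ p₂ p := ⟨by simpa only [one_div] using hHolder.symm⟩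
  set μ := mollMeasure G ℓ
  set ν := boxMeasure d 𝓛
  set A : ℝ≥0∞ := ⨆ r ∈ ball (0 : Euc d) ℓ, eLpNorm (incr f r) p₁ ν
  set B : ℝ≥0∞ := ⨆ r ∈ ball (0 : Euc d) ℓ, eLpNorm (incr g r) p₂ ν
  have hmf := measurable_uncurry_incr hfm
  have hmg := measurable_uncurry_incr hgm
  have hA : ∀ r ∈ ball (0 : Euc d) ℓ, eLpNorm (incr f r) p₁ ν ≤ A := fun r hr =>
    le_iSup₂ (f := fun r (_ : r ∈ ball (0 : Euc d) ℓ) => eLpNorm (incr f r) p₁ ν) r hr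
  have hB : ∀ r ∈ ball (0 : Euc d) ℓ, eLpNorm (incr g r) p₂ ν ≤ B := fun r hr =>
    le_iSup₂ (f := fun r (_ : r ∈ ball (0 : Euc d) ℓ) => eLpNorm (incr g r) p₂ ν) r hr
  have hprod : eLpNorm (fun x => ∫ r, incr f r x * incr g r x ∂μ) p ν ≤ A * B := by
    refine eLpNorm_average_le μ ν (fun r x => incr f r x * incr g r x) (hmf.mul hmg) p hp _ ?_
    filter_upwards [hG.ae_mem_ball hℓ] with r hr
    exact (eLpNorm_mul_le_mul_eLpNorm (hmf.comp measurable_prodMk_left).aestronglyMeasurable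
      (hmg.comp measurable_prodMk_left).aestronglyMeasurable).trans
      (mul_le_mul' (hA r hr) (hB r hr))
  have hf1 : eLpNorm (fun x => ∫ r, incr f r x ∂μ) p₁ ν ≤ A :=
    eLpNorm_average_le μ ν (incr f) hmf p₁ hp₁ _ ((hG.ae_mem_ball hℓ).mono hA)
  have hg1 : eLpNorm (fun x => ∫ r, incr g r x ∂μ) p₂ ν ≤ B :=
    eLpNorm_average_le μ ν (incr g) hmg p₂ hp₂ _ ((hG.ae_mem_ball hℓ).mono hB)
  have mf : AEStronglyMeasurable (fun x => ∫ r, incr f r x ∂μ) ν :=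
    (hmf.stronglyMeasurable.integral_prod_left (μ := μ)).aestronglyMeasurable
  have mg : AEStronglyMeasurable (fun x => ∫ r, incr g r x ∂μ) ν :=
    (hmg.stronglyMeasurable.integral_prod_left (μ := μ)).aestronglyMeasurable
  have mfg : AEStronglyMeasurable (fun x => ∫ r, incr f r x * incr g r x ∂μ) ν :=
    ((hmf.mul hmg).stronglyMeasurable.integral_prod_left (μ := μ)).aestronglyMeasurable
  have htau : tau2 G ℓ f g = (fun x => ∫ r, incr f r x * incr g r x ∂μ)
      - fun x => (∫ r, incr f r x ∂μ) * ∫ r, incr g r x ∂μ :=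
    funext (hG.tau2_eq hℓ hfm hgm hfb hgb)
  rw [htau]
  calc eLpNorm ((fun x => ∫ r, incr f r x * incr g r x ∂μ)
        - fun x => (∫ r, incr f r x ∂μ) * ∫ r, incr g r x ∂μ) p ν
      ≤ eLpNorm (fun x => ∫ r, incr f r x * incr g r x ∂μ) p ν
        + eLpNorm (fun x => (∫ r, incr f r x ∂μ) * ∫ r, incr g r x ∂μ) p ν :=
        eLpNorm_sub_le mfg (mf.mul mg) hp
    _ ≤ A * B + A * B := add_le_add hprod ((eLpNorm_mul_le_mul_eLpNorm mf mg).trans (mul_le_mul' hf1 hg1))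
    _ = 2 * A * B := by ring
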